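/- The tetrahedral cone T is a stationary 2-varifold in ℝ³: for every compactly supported continuously differentiable vector field Y : ℝ³ → ℝ³ one has ∑_{a<b} ∫_{W(ab)} div_{P(ab)} Y dH² = 0, where for a 2-plane P the tangential divergence is div_P Y(x) = e₁·(D_{e₁}Y)(x) + e₂·(D_{e₂}Y)(x) for an orthonormal basis (e₁, e₂) of P, and H² is 2-dimensional Hausdorff measure. -/

import Mathlib

/-!
STATEMENT 0: The tetrahedral cone `T ⊂ ℝ³` is a stationary 2-varifold: for every compactly
supported `C¹` vector field `Y : ℝ³ → ℝ³`,
`∑_{a<b} ∫_{W(ab)} div_{P(ab)} Y dH² = 0`,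
where for the 2-plane `P(ab)` the tangential divergence is computed with respect to the
orthonormal basis `(tp a, tang a b)` of `P(ab)`, and `H²` is 2-dimensional Hausdorff measure.
-/

noncomputable section

open Real MeasureTheory Metric
open scoped RealInnerProductSpace

/-- Euclidean 3-space. -/
abbrev E3 : Type := EuclideanSpace ℝ (Fin 3)

/-- The four vertices of the tetrahedral net. -/
def tp : Fin 4 → E3
  | 0 => (EuclideanSpace.equiv (Fin 3) ℝ).symm ![1, 0, 0]
  | 1 => (EuclideanSpace.equiv (Fin 3) ℝ).symm ![-1/3, 2 * Real.sqrt 2 / 3, 0]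
  | 2 => (EuclideanSpace.equiv (Fin 3) ℝ).symm ![-1/3, -Real.sqrt 2 / 3, Real.sqrt 6 / 3]
  | 3 => (EuclideanSpace.equiv (Fin 3) ℝ).symm ![-1/3, -Real.sqrt 2 / 3, -Real.sqrt 6 / 3]

/-- The wedge `W(ab) = {s • p_a + t • p_b : s, t ≥ 0}`. -/
def Wdg (a b : Fin 4) : Set E3 := {x | ∃ s t : ℝ, 0 ≤ s ∧ 0 ≤ t ∧ x = s • tp a + t • tp b}

/-- Unit tangent at `tp a` to the arc towards `tp b`; `(tp a, tang a b)` is an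
orthonormal basis of the plane `P(ab) = span(p_a, p_b)`. -/
def tang (a b : Fin 4) : E3 := (2 * Real.sqrt 2)⁻¹ • (tp a + (3:ℝ) • tp b)

/-- The tangential divergence of `Y` along the plane `P(ab)`, computed with the orthonormal
basis `(tp a, tang a b)` of `P(ab)`:  `div_P Y(x) = e₁·(D_{e₁}Y)(x) + e₂·(D_{e₂}Y)(x)`. -/
def divP (a b : Fin 4) (Y : E3 → E3) (x : E3) : ℝ :=
  ⟪tp a, fderiv ℝ Y x (tp a)⟫ + ⟪tang a b, fderiv ℝ Y x (tang a b)⟫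

namespace TetAux

/-- The linear parametrisation `(s, t) ↦ s p_a + t p_b`. -/
def Lm (a b : Fin 4) : ℝ × ℝ →L[ℝ] E3 :=
  (ContinuousLinearMap.fst ℝ ℝ ℝ).smulRight (tp a) + (ContinuousLinearMap.snd ℝ ℝ ℝ).smulRight (tp b)

lemma Lm_apply (a b : Fin 4) (z : ℝ × ℝ) : Lm a b z = z.1 • tp a + z.2 • tp b := by
  simp [Lm]

/-- The model parametrisation into the Euclidean plane. -/
def Am : (ℝ × ℝ) ≃ₗ[ℝ] EuclideanSpace ℝ (Fin 2) where
  toFun z := !₂[z.1 - z.2 / 3, 2 * √2 / 3 * z.2]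
  invFun w := (w 0 + w 1 / (2 * √2), 3 / (2 * √2) * w 1)
  map_add' x y := by
    ext i; fin_cases i <;> simp <;> ring
  map_smul' c x := by
    ext i; fin_cases i <;> simp <;> ring
  left_inv z := by
    have h : √2 ≠ 0 := by positivity
    ext <;> simp <;> field_simp; ring
  right_inv w := by
    have h : √2 ≠ 0 := by positivity
    ext i; fin_cases i <;> simp <;> field_simp; ring

lemma tp_inner (a b : Fin 4) : ⟪tp a, tp b⟫ = if a = b then (1 : ℝ) else -1/3 := by
  have h2 : √2 * √2 = 2 := Real.mul_self_sqrt (by norm_num)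
  have h6 : √6 * √6 = 6 := Real.mul_self_sqrt (by norm_num)
  rw [PiLp.inner_apply, Fin.sum_univ_three]
  simp only [RCLike.inner_apply, conj_trivial]
  fin_cases a <;> fin_cases b <;> simp [tp] <;> nlinarith

lemma tp_sum : tp 0 + tp 1 + tp 2 + tp 3 = 0 := by
  ext i; fin_cases i <;> simp [tp] <;> ring

lemma norm_Lm {a b : Fin 4} (hab : a ≠ b) (z : ℝ × ℝ) : ‖Lm a b z‖ = ‖Am z‖ := by
  have h2 : √2 ^ 2 = 2 := Real.sq_sqrt (by norm_num)
  have h : ‖Lm a b z‖ ^ 2 = ‖Am z‖ ^ 2 := by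
    rw [← real_inner_self_eq_norm_sq, Lm_apply, EuclideanSpace.real_norm_sq_eq]
    simp only [inner_add_left, inner_add_right, real_inner_smul_left, real_inner_smul_right,
      tp_inner, if_neg hab, if_neg hab.symm]
    simp [Am, Fin.sum_univ_two, mul_pow, div_pow, h2]
    ring
  exact (sq_eq_sq₀ (norm_nonneg _) (norm_nonneg _)).1 h

lemma Lm_inj {a b : Fin 4} (hab : a ≠ b) : Function.Injective (Lm a b) := by
  rw [injective_iff_map_eq_zero]
  intro z hz
  have : ‖Am z‖ = 0 := by rw [← norm_Lm hab, hz, norm_zero]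
  simpa using this

lemma Lm_emb {a b : Fin 4} (hab : a ≠ b) : Topology.IsClosedEmbedding (Lm a b) :=
  LinearMap.isClosedEmbedding_of_injective (f := (Lm a b).toLinearMap)
    (LinearMap.ker_eq_bot.2 (Lm_inj hab))

instance haus_haar : (μH[2] : Measure (EuclideanSpace ℝ (Fin 2))).IsAddHaarMeasure := by
  simpa using MeasureTheory.isAddHaarMeasure_hausdorffMeasure (E := EuclideanSpace ℝ (Fin 2))

/-- The common scale factor of the Hausdorff measure. -/
def cst : NNReal :=
  ((μH[2] : Measure (EuclideanSpace ℝ (Fin 2))).map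
    Am.toContinuousLinearEquiv.symm).addHaarScalarFactor volume

lemma haus_eq : (μH[2] : Measure (EuclideanSpace ℝ (Fin 2))) =
    (cst • (volume : Measure (ℝ × ℝ))).map Am.toContinuousLinearEquiv := by
  have h := Measure.isAddLeftInvariant_eq_smul ((μH[2] : Measure (EuclideanSpace ℝ (Fin 2))).map
    Am.toContinuousLinearEquiv.symm) volume
  rw [cst, ← h, Measure.map_map (by fun_prop) (by fun_prop)]
  have : (Am.toContinuousLinearEquiv ∘ Am.toContinuousLinearEquiv.symm) = id := by
    ext1 x; simp
  rw [this, Measure.map_id]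

lemma haus_restrict {a b : Fin 4} (hab : a ≠ b) :
    (μH[2] : Measure E3).restrict (Set.range (Lm a b)) =
      (cst • (volume : Measure (ℝ × ℝ))).map (Lm a b) := by
  let i : EuclideanSpace ℝ (Fin 2) → E3 := fun w => Lm a b (Am.symm w)
  have hi : Isometry i := by
    apply Isometry.of_dist_eq
    intro x y
    rw [dist_eq_norm, dist_eq_norm, ← map_sub, ← map_sub, norm_Lm hab]
    simp
  have hr : Set.range i = Set.range (Lm a b) :=
    Am.symm.surjective.range_comp (Lm a b)
  rw [← hr, ← hi.map_hausdorffMeasure (Or.inl (by norm_num)), haus_eq,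
    Measure.map_map hi.continuous.measurable (by fun_prop)]
  congr 1
  ext1 z
  simp [i]

lemma wdg_preimage {a b : Fin 4} (hab : a ≠ b) :
    (Lm a b) ⁻¹' Wdg a b = Set.Ici 0 ×ˢ Set.Ici 0 := by
  ext z
  constructor
  · rintro ⟨s, t, hs, ht, h⟩
    have : z = (s, t) := Lm_inj hab (by rw [h, Lm_apply])
    subst this
    exact ⟨hs, ht⟩
  · rintro ⟨hs, ht⟩
    exact ⟨z.1, z.2, hs, ht, Lm_apply a b z⟩

lemma wdg_integral {a b : Fin 4} (hab : a ≠ b) (f : E3 → ℝ) :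
    ∫ x in Wdg a b, f x ∂μH[2] =
      (cst : ℝ) * ∫ z in (Set.Ici (0:ℝ) ×ˢ Set.Ici (0:ℝ)), f (Lm a b z) := by
  have hsub : Wdg a b ⊆ Set.range (Lm a b) := by
    rintro x ⟨s, t, -, -, rfl⟩
    exact ⟨(s, t), Lm_apply a b _⟩
  rw [← Measure.restrict_restrict_of_subset hsub, haus_restrict hab,
    (Lm_emb hab).measurableEmbedding.setIntegral_map, wdg_preimage hab, Measure.restrict_smul,
    integral_smul_nnreal_measure]
  rfl

lemma integrable_dir {G : ℝ × ℝ → E3} (hG : ContDiff ℝ 1 G) (hc : HasCompactSupport G)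
    (v : ℝ × ℝ) : Integrable (fun z => fderiv ℝ G z v) := by
  apply Continuous.integrable_of_hasCompactSupport
  · exact (hG.continuous_fderiv (by norm_num)).clm_apply continuous_const
  · exact (hc.fderiv (𝕜 := ℝ)).comp_left (g := fun l : ℝ × ℝ →L[ℝ] E3 => l v) (by simp)

lemma quad_dy {G : ℝ × ℝ → E3} (hG : ContDiff ℝ 1 G) (hc : HasCompactSupport G) :
    ∫ z in (Set.Ici (0:ℝ) ×ˢ Set.Ici (0:ℝ)), fderiv ℝ G z (0, 1) =
      - ∫ s in Set.Ioi (0:ℝ), G (s, 0) := by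
  rw [Measure.volume_eq_prod, setIntegral_prod _ (integrable_dir hG hc (0, 1)).integrableOn,
    integral_Ici_eq_integral_Ioi, ← integral_neg]
  congr 1
  ext1 s
  rw [integral_Ici_eq_integral_Ioi]
  have hemb : Topology.IsClosedEmbedding (fun t : ℝ => (s, t)) :=
    (Isometry.of_dist_eq (fun x y => by simp [Prod.dist_eq])).isClosedEmbedding
  have h1 : ContDiff ℝ 1 (fun t : ℝ => G (s, t)) := hG.comp (by fun_prop)
  have h2 : HasCompactSupport (fun t : ℝ => G (s, t)) := hc.comp_isClosedEmbedding hemb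
  rw [← h2.integral_Ioi_deriv_eq h1 0]
  congr 1
  ext1 t
  have hd : HasDerivAt (fun t : ℝ => (s, t)) ((0 : ℝ), (1 : ℝ)) t :=
    (hasDerivAt_const t s).prodMk (hasDerivAt_id t)
  exact (((hG.differentiable (by norm_num) (s, t)).hasFDerivAt).comp_hasDerivAt t hd).deriv.symm

lemma quad_dx {G : ℝ × ℝ → E3} (hG : ContDiff ℝ 1 G) (hc : HasCompactSupport G) :
    ∫ z in (Set.Ici (0:ℝ) ×ˢ Set.Ici (0:ℝ)), fderiv ℝ G z (1, 0) =
      - ∫ t in Set.Ioi (0:ℝ), G (0, t) := by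
  have h1 : ContDiff ℝ 1 (fun z : ℝ × ℝ => G z.swap) :=
    hG.comp (contDiff_snd.prodMk contDiff_fst)
  have h2 : HasCompactSupport (fun z : ℝ × ℝ => G z.swap) :=
    hc.comp_homeomorph (Homeomorph.prodComm ℝ ℝ)
  have h := quad_dy h1 h2
  simp only [Prod.swap_prod_mk] at h
  rw [← h, Measure.volume_eq_prod, ← setIntegral_prod_swap]
  congr 1
  ext1 z
  have hd : HasFDerivAt (fun z : ℝ × ℝ => z.swap)
      ((ContinuousLinearMap.snd ℝ ℝ ℝ).prod (ContinuousLinearMap.fst ℝ ℝ ℝ)) z :=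
    ((ContinuousLinearMap.snd ℝ ℝ ℝ).prod (ContinuousLinearMap.fst ℝ ℝ ℝ)).hasFDerivAt
  have := (((hG.differentiable (by norm_num) z.swap).hasFDerivAt).comp z hd).fderiv
  simp only [Function.comp_def] at this
  rw [this]
  simp

lemma divP_eq (a b : Fin 4) (Y : E3 → E3) (hY : ContDiff ℝ 1 Y) (z : ℝ × ℝ) :
    divP a b Y (Lm a b z) =
      ⟪(9/8 : ℝ) • tp a + (3/8 : ℝ) • tp b, fderiv ℝ (fun z => Y (Lm a b z)) z (1, 0)⟫ +
      ⟪(9/8 : ℝ) • tp b + (3/8 : ℝ) • tp a, fderiv ℝ (fun z => Y (Lm a b z)) z (0, 1)⟫ := by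
  have h2 : √2 ^ 2 = 2 := Real.sq_sqrt (by norm_num)
  have hc : (2 * √2)⁻¹ * (2 * √2)⁻¹ = 1 / 8 := by
    rw [← mul_inv, ← sq, mul_pow, h2]; norm_num
  have := (((hY.differentiable (by norm_num) (Lm a b z)).hasFDerivAt).comp z
    (Lm a b).hasFDerivAt).fderiv
  simp only [Function.comp_def] at this
  rw [this]
  simp only [ContinuousLinearMap.comp_apply, Lm_apply, divP, tang, map_add, map_smul,
    inner_add_left, inner_add_right, real_inner_smul_left, real_inner_smul_right, one_smul,
    zero_smul, add_zero, zero_add]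
  linear_combination (⟪tp a, fderiv ℝ Y (z.1 • tp a + z.2 • tp b) (tp a)⟫ +
    3 * ⟪tp a, fderiv ℝ Y (z.1 • tp a + z.2 • tp b) (tp b)⟫ +
    3 * ⟪tp b, fderiv ℝ Y (z.1 • tp a + z.2 • tp b) (tp a)⟫ +
    9 * ⟪tp b, fderiv ℝ Y (z.1 • tp a + z.2 • tp b) (tp b)⟫) * hc

lemma wedge_formula {a b : Fin 4} (hab : a ≠ b) (Y : E3 → E3) (hY : ContDiff ℝ 1 Y)
    (hYc : HasCompactSupport Y) :
    ∫ x in Wdg a b, divP a b Y x ∂μH[2] = - (cst : ℝ) *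
      (⟪(9/8 : ℝ) • tp a + (3/8 : ℝ) • tp b, ∫ t in Set.Ioi (0:ℝ), Y (t • tp b)⟫ +
       ⟪(9/8 : ℝ) • tp b + (3/8 : ℝ) • tp a, ∫ t in Set.Ioi (0:ℝ), Y (t • tp a)⟫) := by
  have h1 : ContDiff ℝ 1 (fun z => Y (Lm a b z)) := hY.comp (Lm a b).contDiff
  have h2 : HasCompactSupport (fun z => Y (Lm a b z)) := hYc.comp_isClosedEmbedding (Lm_emb hab)
  have i1 := (integrable_dir h1 h2 (1, 0)).integrableOn (s := Set.Ici (0:ℝ) ×ˢ Set.Ici (0:ℝ))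
  have i2 := (integrable_dir h1 h2 (0, 1)).integrableOn (s := Set.Ici (0:ℝ) ×ˢ Set.Ici (0:ℝ))
  rw [wdg_integral hab]
  simp only [divP_eq a b Y hY]
  rw [integral_add (i1.const_inner _) (i2.const_inner _), integral_inner i1, integral_inner i2,
    quad_dx h1 h2, quad_dy h1 h2]
  simp only [Lm_apply, zero_smul, zero_add, add_zero, inner_neg_right]
  ring

end TetAux

/-- The tetrahedral cone is stationary: the first variation of the 2-dimensional Hausdorff
measure of `T = ⋃_{a<b} W(ab)` vanishes for every compactly supported `C¹` vector field. -/
theorem tetrahedral_cone_is_stationary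
    (Y : E3 → E3) (hY : ContDiff ℝ 1 Y) (hYc : HasCompactSupport Y) :
    ∑ a : Fin 4, ∑ b : Fin 4,
      (if a < b then ∫ x in Wdg a b, divP a b Y x ∂μH[2] else 0) = 0 := by
  have h3 : tp 3 = - (tp 0 + tp 1 + tp 2) := by
    rw [eq_neg_iff_add_eq_zero, add_comm]; exact TetAux.tp_sum
  simp only [Fin.sum_univ_four, Fin.reduceLT, if_true, if_false, lt_self_iff_false,
    TetAux.wedge_formula (show (0 : Fin 4) ≠ 1 by decide) Y hY hYc,
    TetAux.wedge_formula (show (0 : Fin 4) ≠ 2 by decide) Y hY hYc,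
    TetAux.wedge_formula (show (0 : Fin 4) ≠ 3 by decide) Y hY hYc,
    TetAux.wedge_formula (show (1 : Fin 4) ≠ 2 by decide) Y hY hYc,
    TetAux.wedge_formula (show (1 : Fin 4) ≠ 3 by decide) Y hY hYc,
    TetAux.wedge_formula (show (2 : Fin 4) ≠ 3 by decide) Y hY hYc]
  generalize (∫ t in Set.Ioi (0:ℝ), Y (t • tp 0)) = I0
  generalize (∫ t in Set.Ioi (0:ℝ), Y (t • tp 1)) = I1
  generalize (∫ t in Set.Ioi (0:ℝ), Y (t • tp 2)) = I2
  generalize (∫ t in Set.Ioi (0:ℝ), Y (t • tp 3)) = I3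
  rw [h3]
  simp only [inner_add_left, inner_neg_left, real_inner_smul_left]
  ring
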